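/- Let occ(σ) be the number of occurrences in σ of the mesh pattern Nr. 55, where an occurrence is a pair of indices i < j with a = σ_i < σ_j = b such that: every element before position i has value greater than b; every element strictly between positions i and j has value less than a; and every element after position j has value greater than b. Let E(t,u) = Σ_{n≥0} t^n Σ_{σ∈K_n} u^{occ(σ)}. Then (1 − t(1−u) − t^2 + t(1−u)·A(t))·E(t,u) = (1+t)·((1−ut)·A(t) − t(1−u)) as formal power series in t over ℚ[u]. -/

import Mathlib

/-- A permutation of `{0, …, n-1}` is a *king permutation* if consecutive entries
differ by more than 1 in absolute value. -/
def IsKing {n : ℕ} (σ : Equiv.Perm (Fin n)) : Prop :=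
  ∀ i : Fin n, ∀ h : (i : ℕ) + 1 < n,
    1 < |((σ ⟨(i : ℕ) + 1, h⟩ : ℕ) : ℤ) - ((σ i : ℕ) : ℤ)|

/-- `kingCount n = A_n`, the number of king permutations of length `n`. -/
noncomputable def kingCount (n : ℕ) : ℕ :=
  Nat.card {σ : Equiv.Perm (Fin n) // IsKing σ}

/-- `A(t)` regarded as a power series over `ℚ[u]` (constant-polynomial coefficients). -/
noncomputable def kingAu : PowerSeries (Polynomial ℚ) :=
  PowerSeries.mk fun n => (kingCount n : Polynomial ℚ)

/-- `u` viewed as a constant power series over `ℚ[u]`. -/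
noncomputable def U : PowerSeries (Polynomial ℚ) :=
  PowerSeries.C (R := Polynomial ℚ) Polynomial.X

/-- `t`, the power series variable. -/
noncomputable def T : PowerSeries (Polynomial ℚ) :=
  PowerSeries.X

/-- An occurrence of the mesh pattern Nr. 55 in `σ`. -/
def OccP {n : ℕ} (σ : Equiv.Perm (Fin n)) (i j : Fin n) : Prop :=
  i < j ∧ σ i < σ j ∧
    (∀ k : Fin n, k < i → σ j < σ k) ∧
    (∀ k : Fin n, i < k → k < j → σ k < σ i) ∧
    (∀ k : Fin n, j < k → σ j < σ k)

/-- The number of occurrences of the mesh pattern Nr. 55 in `σ`. -/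
noncomputable def occP {n : ℕ} (σ : Equiv.Perm (Fin n)) : ℕ :=
  Nat.card {p : Fin n × Fin n // OccP σ p.1 p.2}

-- `E(t,u) = Σ_{n≥0} t^n Σ_{σ∈K_n} u^{occ(σ)}`, a power series in `t` over `ℚ[u]`.
open Classical in
noncomputable def Etu : PowerSeries (Polynomial ℚ) :=
  PowerSeries.mk fun n =>
    ∑ σ : Equiv.Perm (Fin n),
      if IsKing σ then (Polynomial.X : Polynomial ℚ) ^ occP σ else 0


open scoped Classical

namespace King55

def Far (a b : ℕ) : Prop := a + 1 < b ∨ b + 1 < a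

/-- `l` is an arrangement of the interval `[s, s+n)`. -/
def IsP (s n : ℕ) (l : List ℕ) : Prop := l.Nodup ∧ ∀ x, x ∈ l ↔ s ≤ x ∧ x < s + n

noncomputable def perms (s n : ℕ) : Finset (List ℕ) := (List.range' s n).permutations.toFinset

theorem mem_perms {s n : ℕ} {l : List ℕ} : l ∈ perms s n ↔ IsP s n l := by
  unfold perms IsP
  rw [List.mem_toFinset, List.mem_permutations]
  constructor
  · intro h
    refine ⟨h.nodup_iff.2 (List.nodup_range'), fun x => ?_⟩
    rw [h.mem_iff, List.mem_range'_1]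
  · rintro ⟨h1, h2⟩
    rw [List.perm_ext_iff_of_nodup h1 (List.nodup_range')]
    intro x
    rw [h2, List.mem_range'_1]

noncomputable def K (n : ℕ) : Finset (List ℕ) := (perms 0 n).filter (List.IsChain Far)

theorem mem_K {n : ℕ} {l : List ℕ} : l ∈ K n ↔ IsP 0 n l ∧ l.IsChain Far := by
  simp [K, mem_perms]

noncomputable def Gs (n : ℕ) : Finset (List ℕ) := (K n).filter (fun l => ∀ x ∈ l.head?, x + 1 ≠ n)

theorem mem_Gs {n : ℕ} {l : List ℕ} :
    l ∈ Gs n ↔ (IsP 0 n l ∧ l.IsChain Far) ∧ ∀ x ∈ l.head?, x + 1 ≠ n := by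
  simp [Gs, mem_K]

noncomputable def Rs (s k : ℕ) : Finset (List ℕ × List ℕ) :=
  (((perms s k).biUnion (fun l => (Finset.range (l.length + 1)).image
    (fun i => (l.take i, l.drop i))))).filter
    (fun p => p.1.IsChain Far ∧ p.2.IsChain Far ∧ ∀ y ∈ p.2.head?, y ≠ s)

theorem mem_Rs {s k : ℕ} {p : List ℕ × List ℕ} :
    p ∈ Rs s k ↔ IsP s k (p.1 ++ p.2) ∧ p.1.IsChain Far ∧ p.2.IsChain Far ∧
      ∀ y ∈ p.2.head?, y ≠ s := by
  unfold Rs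
  rw [Finset.mem_filter]
  refine and_congr_left fun _ => ?_
  simp only [Finset.mem_biUnion, Finset.mem_image, mem_perms, Finset.mem_range]
  constructor
  · rintro ⟨l, hl, i, hi, rfl⟩
    simpa using hl
  · intro h
    exact ⟨p.1 ++ p.2, h, p.1.length, by simp, by simp⟩

def Occ (l : List ℕ) (m : ℕ) : Prop :=
  ∃ P t S : List ℕ, l = P ++ m :: (t ++ (m + 1) :: S) ∧ (∀ x ∈ P, m + 1 < x) ∧ (∀ x ∈ t, x < m) ∧
    (∀ x ∈ S, m + 1 < x)

noncomputable def occF (l : List ℕ) : Finset ℕ := l.toFinset.filter (Occ l)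

theorem mem_occF {l : List ℕ} {m : ℕ} : m ∈ occF l ↔ Occ l m := by
  unfold occF
  simp only [Finset.mem_filter, List.mem_toFinset, and_iff_right_iff_imp]
  rintro ⟨P, t, S, rfl, -⟩
  simp

theorem split_unique {a : ℕ} {x₁ x₂ z₁ z₂ : List ℕ} (hn : (x₁ ++ a :: z₁).Nodup)
    (h : x₁ ++ a :: z₁ = x₂ ++ a :: z₂) : x₁ = x₂ ∧ z₁ = z₂ := by
  have h1 : a ∉ x₁ ∧ a ∉ z₁ := by
    simp only [List.nodup_append, List.nodup_cons] at hn
    grind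
  have := (List.append_cons_inj_of_notMem h1.1 h1.2).1 h
  exact ⟨this.1, this.2.2⟩

theorem occ_inner {m m' : ℕ} {P t S : List ℕ} (hn : (P ++ m :: (t ++ (m + 1) :: S)).Nodup)
    (hP : ∀ x ∈ P, m + 1 < x) (ht : ∀ x ∈ t, x < m) (hS : ∀ x ∈ S, m + 1 < x) :
    (Occ (P ++ m :: (t ++ (m + 1) :: S)) m' ∧ m' < m) ↔ Occ t m' := by
  constructor
  · rintro ⟨⟨P', t', S', h, hP', ht', hS'⟩, hm⟩
    have e1 : m' ∈ t := by
      have : m' ∈ P ++ m :: (t ++ (m + 1) :: S) := by rw [h]; simp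
      simp only [List.mem_append, List.mem_cons] at this
      grind
    obtain ⟨t1, t2, rfl⟩ := List.append_of_mem e1
    have h3 : (P ++ m :: t1) ++ m' :: (t2 ++ (m + 1) :: S) = P' ++ m' :: (t' ++ (m' + 1) :: S') := by
      rw [← h]; simp
    have hn' : ((P ++ m :: t1) ++ m' :: (t2 ++ (m + 1) :: S)).Nodup := by simpa using hn
    obtain ⟨rfl, h4⟩ := split_unique hn' h3
    have e2 : m' + 1 ∈ t2 := by
      have : m' + 1 ∈ t2 ++ (m + 1) :: S := by rw [h4]; simp
      simp only [List.mem_append, List.mem_cons] at this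
      grind
    obtain ⟨t3, t4, rfl⟩ := List.append_of_mem e2
    have h5 : t3 ++ (m' + 1) :: (t4 ++ (m + 1) :: S) = t' ++ (m' + 1) :: S' := by
      rw [← h4]; simp
    have hn2 : (t3 ++ (m' + 1) :: (t4 ++ (m + 1) :: S)).Nodup := by
      have := (List.nodup_cons.1 (List.nodup_append.1 hn').2.1).2
      simpa using this
    obtain ⟨rfl, rfl⟩ := split_unique hn2 h5
    refine ⟨t1, t3, t4, rfl, ?_, ht', ?_⟩
    · intro x hx; exact hP' x (by simp [hx])
    · intro x hx; exact hS' x (by simp [hx])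
  · rintro ⟨P', t', S', rfl, hP', ht', hS'⟩
    have h1 : m' + 1 < m := ht _ (by simp)
    refine ⟨⟨P ++ m :: P', t', S' ++ (m + 1) :: S, by simp, ?_, ht', ?_⟩, by omega⟩
    · intro x hx
      simp only [List.mem_append, List.mem_cons] at hx
      grind
    · intro x hx
      simp only [List.mem_append, List.mem_cons] at hx
      grind

theorem occ_cons {n m : ℕ} {l : List ℕ} (hl : ∀ x ∈ l, x < n) : Occ (n :: l) m ↔ Occ l m := by
  constructor
  · rintro ⟨P, t, S, h, hP, ht, hS⟩
    cases P with
    | nil =>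
      simp only [List.nil_append, List.cons.injEq] at h
      obtain ⟨rfl, rfl⟩ := h
      have := hl (n + 1) (by simp)
      omega
    | cons a P =>
      simp only [List.cons_append, List.cons.injEq] at h
      exact ⟨P, t, S, h.2, fun x hx => hP x (by simp [hx]), ht, hS⟩
  · rintro ⟨P, t, S, rfl, hP, ht, hS⟩
    have := hl (m + 1) (by simp)
    exact ⟨n :: P, t, S, by simp, by simpa using ⟨this, hP⟩, ht, hS⟩

theorem occF_cons {n : ℕ} {l : List ℕ} (hl : ∀ x ∈ l, x < n) : occF (n :: l) = occF l := by
  ext m; rw [mem_occF, mem_occF, occ_cons hl]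

open Polynomial in
theorem telescope (s : Finset ℕ) :
    (1 - (X : ℚ[X])) * ∑ m ∈ s, X ^ (s.filter (· < m)).card = 1 - X ^ s.card := by
  induction s using Finset.induction_on_max with
  | empty => simp
  | insert a s h ih =>
    have ha : a ∉ s := fun h' => lt_irrefl _ (h a h')
    rw [Finset.sum_insert ha, Finset.card_insert_of_notMem ha]
    have e1 : (insert a s).filter (· < a) = s := by
      ext x; simp only [Finset.mem_filter, Finset.mem_insert]; grind
    have e2 : ∀ m ∈ s, ((insert a s).filter (· < m)) = s.filter (· < m) := by
      intro m hm
      ext x; simp only [Finset.mem_filter, Finset.mem_insert]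
      have := h m hm
      grind
    rw [e1, Finset.sum_congr rfl (fun m hm => by rw [e2 m hm]), mul_add, ih]
    ring

noncomputable def e (n : ℕ) : Polynomial ℚ := ∑ l ∈ K n, Polynomial.X ^ (occF l).card
noncomputable def g (n : ℕ) : Polynomial ℚ := ∑ l ∈ Gs n, Polynomial.X ^ (occF l).card

theorem e_zero : e 0 = g 0 := by
  unfold e g
  congr 1
  ext l
  rw [mem_K, mem_Gs]
  simp

theorem K_succ (n : ℕ) : K (n + 1) = Gs (n + 1) ∪ (Gs n).image (fun l => n :: l) := by
  ext l
  simp only [Finset.mem_union, Finset.mem_image, mem_Gs, mem_K]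
  constructor
  · rintro ⟨h1, h2⟩
    by_cases h : ∀ x ∈ l.head?, x + 1 ≠ n + 1
    · exact Or.inl ⟨⟨h1, h2⟩, h⟩
    · right
      cases l with
      | nil => simp at h
      | cons a l =>
        simp only [List.head?_cons, Option.mem_some_iff] at h
        have : a = n := by grind
        subst this
        refine ⟨l, ⟨⟨⟨(List.nodup_cons.1 h1.1).2, ?_⟩, (List.isChain_cons.1 h2).2⟩, ?_⟩, rfl⟩
        · intro x
          have := h1.2 x
          have h3 := (List.nodup_cons.1 h1.1).1
          simp only [List.mem_cons] at this
          by_cases hx : x = a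
          · subst hx; simp [h3]
          · simp only [hx, false_or] at this
            rw [this]; omega
        · intro x hx
          have := (List.isChain_cons.1 h2).1 x hx
          unfold Far at this; omega
  · rintro (h | ⟨l, ⟨⟨⟨h1, h1'⟩, h2⟩, h3⟩, rfl⟩)
    · exact h.1
    · refine ⟨⟨?_, ?_⟩, ?_⟩
      · rw [List.nodup_cons]; refine ⟨?_, h1⟩; rw [h1']; omega
      · intro x; rw [List.mem_cons, h1']; omega
      · rw [List.isChain_cons]; refine ⟨?_, h2⟩
        intro y hy
        have := h3 y hy
        have := (h1' y).1 (List.mem_of_mem_head? hy)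
        unfold Far; omega

theorem e_succ (n : ℕ) : e (n + 1) = g (n + 1) + g n := by
  unfold e g
  rw [K_succ, Finset.sum_union, Finset.sum_image]
  · congr 1
    apply Finset.sum_congr rfl
    intro l hl
    rw [occF_cons]
    intro x hx
    have := ((mem_Gs.1 hl).1.1.2 x).1 hx
    omega
  · intro a _ b _ h; simpa using h
  · rw [Finset.disjoint_left]
    intro l hl
    simp only [Finset.mem_image, not_exists, not_and]
    rintro l' - rfl
    have := (mem_Gs.1 hl).2
    simp at this

theorem far_symm {a b : ℕ} (h : Far a b) : Far b a := by unfold Far at *; omega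

theorem chain_reverse {l : List ℕ} (h : l.IsChain Far) : l.reverse.IsChain Far := by
  rw [List.isChain_reverse]
  exact h.imp fun a b hab => far_symm hab

theorem Rs_shift (s k : ℕ) : (Rs 0 k).card = (Rs s k).card := by
  apply Finset.card_bij (fun p _ => (p.1.map (· + s), p.2.map (· + s)))
  · rintro ⟨P, S⟩ h
    rw [mem_Rs] at h ⊢
    obtain ⟨⟨h1, h2⟩, h3, h4, h5⟩ := h
    simp only [← List.map_append] at *
    refine ⟨⟨h1.map (add_left_injective s), ?_⟩, ?_, ?_, ?_⟩
    · intro x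
      rw [List.mem_map]
      constructor
      · rintro ⟨y, hy, rfl⟩
        rw [h2] at hy; omega
      · intro hx
        exact ⟨x - s, (h2 _).2 (by omega), by omega⟩
    · rw [List.isChain_map]
      exact h3.imp fun a b hab => by unfold Far at *; omega
    · rw [List.isChain_map]
      exact h4.imp fun a b hab => by unfold Far at *; omega
    · intro y hy
      rw [List.head?_map] at hy
      simp only [Option.mem_def, Option.map_eq_some_iff] at hy
      obtain ⟨z, hz, rfl⟩ := hy
      have := h5 z hz
      omega
  · rintro ⟨P, S⟩ _ ⟨P', S'⟩ _ h
    simp only [Prod.mk.injEq] at h ⊢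
    have := List.map_injective_iff.2 (add_left_injective s)
    exact ⟨this h.1, this h.2⟩
  · rintro ⟨P, S⟩ h
    rw [mem_Rs] at h
    obtain ⟨⟨h1, h2⟩, h3, h4, h5⟩ := h
    simp only at h1 h2 h3 h4 h5
    have key : ∀ L : List ℕ, (∀ x ∈ L, s ≤ x) → (L.map (· - s)).map (· + s) = L := by
      intro L hL
      rw [List.map_map]
      conv_rhs => rw [← List.map_id L]
      apply List.map_congr_left
      intro x hx
      have := hL x hx
      simp; omega
    have hP : ∀ x ∈ P, s ≤ x := fun x hx => ((h2 x).1 (by simp [hx])).1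
    have hS : ∀ x ∈ S, s ≤ x := fun x hx => ((h2 x).1 (by simp [hx])).1
    refine ⟨(P.map (· - s), S.map (· - s)), ?_, ?_⟩
    swap
    · simp only [key P hP, key S hS]
    rw [mem_Rs]
    rw [← key P hP, List.isChain_map] at h3
    rw [← key S hS, List.isChain_map] at h4
    refine ⟨⟨?_, ?_⟩, h3.imp fun a b hab => by (unfold Far at *; omega),
      h4.imp fun a b hab => by (unfold Far at *; omega), ?_⟩
    · rw [← key P hP, ← key S hS, ← List.map_append] at h1
      exact List.Nodup.of_map _ h1
    · intro x
      simp only [← List.map_append]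
      rw [List.mem_map]
      constructor
      · rintro ⟨y, hy, rfl⟩
        rw [h2] at hy; omega
      · intro hx
        exact ⟨x + s, (h2 _).2 (by omega), by omega⟩
    · intro y hy
      simp only [List.head?_map] at hy
      simp only [Option.mem_def, Option.map_eq_some_iff] at hy
      obtain ⟨z, hz, rfl⟩ := hy
      have := h5 z hz
      have := hS z (List.mem_of_mem_head? hz)
      omega

theorem nodup_mid {P S : List ℕ} {a : ℕ} :
    (P ++ a :: S).Nodup ↔ a ∉ P ++ S ∧ (P ++ S).Nodup := by
  rw [List.nodup_middle, List.nodup_cons]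

theorem K_card (k : ℕ) :
    ((Rs 1 k).filter (fun p => ¬ 1 ∈ p.1.getLast?)).card = (K (k + 1)).card := by
  apply Finset.card_bij (fun p _ => p.1 ++ 0 :: p.2)
  · rintro ⟨P, S⟩ h
    rw [Finset.mem_filter, mem_Rs] at h
    obtain ⟨⟨⟨h1, h2⟩, h3, h4, h5⟩, h6⟩ := h
    simp only at h1 h2 h3 h4 h5 h6
    rw [mem_K]
    refine ⟨⟨?_, ?_⟩, ?_⟩
    · rw [nodup_mid]; refine ⟨?_, h1⟩; rw [h2]; omega
    · intro x
      have := h2 x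
      simp only [List.mem_append, List.mem_cons] at this ⊢
      rw [show (x ∈ P ∨ x = 0 ∨ x ∈ S) ↔ (x = 0 ∨ (x ∈ P ∨ x ∈ S)) by tauto, this]
      omega
    · rw [List.isChain_append, List.isChain_cons]
      refine ⟨h3, ⟨?_, h4⟩, ?_⟩
      · intro y hy
        have a1 := h5 y hy
        have a2 := (h2 y).1 (by simp [List.mem_of_mem_head? hy])
        unfold Far; omega
      · intro x hx y hy
        simp only [List.head?_cons, Option.mem_some_iff] at hy
        subst hy
        have a1 : x ≠ 1 := by rintro rfl; exact h6 hx
        have a2 := (h2 x).1 (by simp [List.mem_of_mem_getLast? hx])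
        unfold Far; omega
  · rintro ⟨P, S⟩ h ⟨P', S'⟩ _ hh
    rw [Finset.mem_filter, mem_Rs] at h
    obtain ⟨⟨⟨h1, h2⟩, h3, h4, h5⟩, h6⟩ := h
    simp only at h1 h2 hh
    have : (P ++ 0 :: S).Nodup := by
      rw [nodup_mid]; refine ⟨?_, h1⟩; rw [h2]; omega
    have := split_unique this hh
    rw [this.1, this.2]
  · intro l hl
    rw [mem_K] at hl
    obtain ⟨⟨h1, h2⟩, h3⟩ := hl
    obtain ⟨P, S, rfl⟩ := List.append_of_mem ((h2 0).2 (by omega))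
    refine ⟨(P, S), ?_, rfl⟩
    rw [nodup_mid] at h1
    rw [List.isChain_append, List.isChain_cons] at h3
    rw [Finset.mem_filter, mem_Rs]
    refine ⟨⟨⟨h1.2, ?_⟩, h3.1, h3.2.1.2, ?_⟩, ?_⟩
    · intro x
      have a1 := h2 x
      have a2 := h1.1
      simp only [List.mem_append, List.mem_cons] at a1 a2 ⊢
      by_cases hx : x = 0
      · subst hx; exact ⟨fun h => (a2 h).elim, fun h => by omega⟩
      · simp only [hx, false_or] at a1; rw [a1]; omega
    · intro y hy
      have := h3.2.1.1 y hy
      unfold Far at this; omega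
    · intro hy
      have := h3.2.2 1 hy 0 (by simp)
      unfold Far at this; omega

theorem Rs_card_last (s k : ℕ) :
    (Rs (s + 1) k).card = ((Rs s (k + 1)).filter (fun p => s ∈ p.1.getLast?)).card := by
  apply Finset.card_bij (fun p _ => (p.2.reverse ++ [s], p.1.reverse))
  · rintro ⟨P, S⟩ h
    rw [mem_Rs] at h
    obtain ⟨⟨h1, h2⟩, h3, h4, h5⟩ := h
    simp only at h1 h2 h3 h4 h5
    have hs : s ∉ P ++ S := by rw [h2]; omega
    rw [Finset.mem_filter, mem_Rs]
    refine ⟨⟨⟨?_, ?_⟩, ?_, chain_reverse h3, ?_⟩, ?_⟩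
    · simp only [List.append_assoc, List.singleton_append]
      rw [nodup_mid]
      simp only [← List.reverse_append, List.nodup_reverse, List.mem_reverse]
      exact ⟨hs, h1⟩
    · intro x
      have := h2 x
      simp only [List.mem_append, List.mem_reverse, List.mem_singleton] at this ⊢
      rw [show ((x ∈ S ∨ x = s) ∨ x ∈ P) ↔ (x = s ∨ (x ∈ P ∨ x ∈ S)) by tauto, this]
      omega
    · rw [List.isChain_append]
      refine ⟨chain_reverse h4, by simp, ?_⟩
      intro x hx y hy
      simp only [List.getLast?_reverse] at hx
      simp only [List.head?_cons, Option.mem_some_iff] at hy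
      subst hy
      have a1 := h5 x hx
      have a2 := (h2 x).1 (by simp [List.mem_of_mem_head? hx])
      unfold Far; omega
    · intro y hy
      simp only [List.head?_reverse] at hy
      have := (h2 y).1 (by simp [List.mem_of_mem_getLast? hy])
      omega
    · simp
  · rintro ⟨P, S⟩ _ ⟨P', S'⟩ _ h
    simp only [Prod.mk.injEq, List.append_cancel_right_eq, List.reverse_inj] at h
    rw [h.1, h.2]
  · rintro ⟨P, S⟩ h
    rw [Finset.mem_filter, mem_Rs] at h
    obtain ⟨⟨⟨h1, h2⟩, h3, h4, h5⟩, h6⟩ := h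
    simp only at h1 h2 h3 h4 h5 h6
    obtain ⟨P, rfl⟩ := List.getLast?_eq_some_iff.1 h6
    refine ⟨(S.reverse, P.reverse), ?_, by simp⟩
    rw [mem_Rs]
    simp only [List.append_assoc, List.singleton_append, nodup_mid] at h1
    rw [List.isChain_append] at h3
    refine ⟨⟨?_, ?_⟩, chain_reverse h4, chain_reverse h3.1, ?_⟩
    · simp only [← List.reverse_append, List.nodup_reverse]
      exact h1.2
    · intro x
      have a1 := h2 x
      have a2 := h1.1
      simp only [List.mem_append, List.mem_reverse, List.mem_singleton] at a1 a2 ⊢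
      by_cases hx : x = s
      · subst hx; rw [or_comm]; exact ⟨fun h => (a2 h).elim, fun h => by omega⟩
      · simp only [hx, or_false] at a1; rw [or_comm, a1]; omega
    · intro y hy
      simp only [List.head?_reverse] at hy
      have := h3.2.2 y hy s (by simp)
      unfold Far at this; omega

theorem K_one : (K 1).card = (Rs 0 0).card := by
  rw [← K_card, Rs_shift 1]
  congr 1
  apply Finset.filter_true_of_mem
  rintro ⟨P, S⟩ h h6
  have := (mem_Rs.1 h).1.2 1
  simp only at h6
  have h7 := List.mem_of_mem_getLast? h6
  simp [h7] at this

theorem K_succ_card (k : ℕ) : (K (k + 2)).card + (Rs 0 k).card = (Rs 0 (k + 1)).card := by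
  rw [← K_card, Rs_shift 2 k, Rs_card_last, Rs_shift 1 (k + 1), add_comm]
  exact Finset.card_filter_add_card_filter_not _

theorem K_zero : (K 0).card = 1 := by
  rw [Finset.card_eq_one]
  refine ⟨[], ?_⟩
  ext l
  rw [mem_K, Finset.mem_singleton]
  constructor
  · rintro ⟨⟨_, h⟩, _⟩
    rw [List.eq_nil_iff_forall_not_mem]
    intro x; rw [h]; omega
  · rintro rfl
    simp [IsP]

theorem or_shuffle (a b c d f : Prop) : (a ∨ b ∨ c ∨ d ∨ f) ↔ ((a ∨ f) ∨ c ∨ b ∨ d) := by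
  tauto

theorem block_mem {m k : ℕ} {P t S : List ℕ} (hP : ∀ x ∈ P, m + 1 < x) (ht : ∀ x ∈ t, x < m)
    (hS : ∀ x ∈ S, m + 1 < x) :
    P ++ m :: (t ++ (m + 1) :: S) ∈ K (m + 2 + k) ↔
      (m ≠ 0 ∧ t ∈ Gs m ∧ (P, S) ∈ Rs (m + 2) k) := by
  rw [mem_K, mem_Gs, mem_Rs]
  have hnd : (P ++ m :: (t ++ (m + 1) :: S)).Nodup ↔ t.Nodup ∧ (P ++ S).Nodup := by
    simp only [List.nodup_append, List.nodup_cons, List.mem_append, List.mem_cons]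
    constructor
    · rintro ⟨h1, ⟨h2, h3, h4, h5⟩, h6⟩
      exact ⟨h3, h1, h4.2, fun a ha b hb => h6 a ha b (Or.inr (Or.inr (Or.inr hb)))⟩
    · rintro ⟨h1, h2, h3, h4⟩
      refine ⟨h2, ⟨?_, h1, ⟨?_, h3⟩, ?_⟩, ?_⟩
      · rintro (h | h | h)
        · have := ht _ h; omega
        · omega
        · have := hS _ h; omega
      · intro h; have := hS _ h; omega
      · rintro a ha b (rfl | hb)
        · have := ht _ ha; omega
        · have := ht _ ha; have := hS _ hb; omega
      · rintro a ha b (rfl | hb | rfl | hb)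
        · have := hP _ ha; omega
        · have := hP _ ha; have := ht _ hb; omega
        · have := hP _ ha; omega
        · exact h4 a ha b hb
  have hmem : (∀ x, x ∈ P ++ m :: (t ++ (m + 1) :: S) ↔ 0 ≤ x ∧ x < 0 + (m + 2 + k)) ↔
      (∀ x, x ∈ t ↔ 0 ≤ x ∧ x < 0 + m) ∧ (∀ x, x ∈ P ++ S ↔ m + 2 ≤ x ∧ x < m + 2 + k) := by
    simp only [List.mem_append, List.mem_cons]
    constructor
    · intro h
      refine ⟨fun x => ⟨fun hx => by have := ht x hx; omega, fun hx => ?_⟩,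
        fun x => ⟨fun hx => ⟨?_, ?_⟩, fun hx => ?_⟩⟩
      · rcases (h x).2 (by omega) with h' | h' | h' | h' | h'
        · have := hP _ h'; omega
        · omega
        · exact h'
        · omega
        · have := hS _ h'; omega
      · rcases hx with h' | h'
        · have := hP _ h'; omega
        · have := hS _ h'; omega
      · have := (h x).1 (by tauto)
        omega
      · rcases (h x).2 (by omega) with h' | h' | h' | h' | h'
        · exact Or.inl h'
        · omega
        · have := ht _ h'; omega
        · omega
        · exact Or.inr h'
    · rintro ⟨h1, h2⟩ x
      have a1 := h1 x
      have a2 := h2 x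
      rw [or_shuffle, a1, a2]
      omega
  unfold IsP
  rw [hnd, hmem]
  have hch : (∀ x, x ∈ t ↔ 0 ≤ x ∧ x < 0 + m) →
      ((P ++ m :: (t ++ (m + 1) :: S)).IsChain Far ↔
      m ≠ 0 ∧ t.IsChain Far ∧ (∀ x ∈ t.head?, x + 1 ≠ m) ∧ P.IsChain Far ∧ S.IsChain Far ∧
        ∀ y ∈ S.head?, y ≠ m + 2) := by
    intro hm
    rw [List.isChain_append, List.isChain_cons, List.isChain_append, List.isChain_cons]
    constructor
    · rintro ⟨h1, ⟨h2, h3, ⟨h4, h5⟩, h6⟩, h7⟩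
      refine ⟨?_, h3, ?_, h1, h5, ?_⟩
      · rintro rfl
        have : t = [] := by
          rw [List.eq_nil_iff_forall_not_mem]; intro x; rw [hm]; omega
        subst this
        have := h2 1 (by simp)
        unfold Far at this; omega
      · intro x hx
        have := h2 x (by
          cases t with
          | nil => simp at hx
          | cons a t => simpa using hx)
        unfold Far at this; omega
      · intro y hy
        have := h4 y hy
        unfold Far at this; omega
    · rintro ⟨h1, h2, h3, h4, h5, h6⟩
      refine ⟨h4, ⟨?_, h2, ⟨?_, h5⟩, ?_⟩, ?_⟩
      · have : 0 ∈ t := by rw [hm]; omega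
        intro y hy
        cases t with
        | nil => simp at this
        | cons a t =>
          simp only [List.cons_append, List.head?_cons, Option.mem_some_iff] at hy h3
          subst hy
          have a1 := h3 a rfl
          have a2 := ht a (by simp)
          unfold Far; omega
      · intro y hy
        have a1 := h6 y hy
        have a2 := hS y (List.mem_of_mem_head? hy)
        unfold Far; omega
      · intro x hx y hy
        simp only [List.head?_cons, Option.mem_some_iff] at hy
        subst hy
        have a2 := ht x (List.mem_of_mem_getLast? hx)
        unfold Far; omega
      · intro x hx y hy
        simp only [List.head?_cons, Option.mem_some_iff] at hy
        subst hy
        have a2 := hP x (List.mem_of_mem_getLast? hx)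
        unfold Far; omega
  constructor
  · rintro ⟨⟨⟨n1, n2⟩, m1, m2⟩, c⟩
    obtain ⟨c1, c2, c3, c4, c5, c6⟩ := (hch m1).1 c
    exact ⟨c1, ⟨⟨⟨n1, m1⟩, c2⟩, c3⟩, ⟨n2, m2⟩, c4, c5, c6⟩
  · rintro ⟨c1, ⟨⟨⟨n1, m1⟩, c2⟩, c3⟩, ⟨n2, m2⟩, c4, c5, c6⟩
    exact ⟨⟨⟨n1, n2⟩, m1, m2⟩, (hch m1).2 ⟨c1, c2, c3, c4, c5, c6⟩⟩

theorem block_sum (m k : ℕ) :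
    ∑ l ∈ (K (m + 2 + k)).filter (fun l => Occ l m),
      (Polynomial.X : Polynomial ℚ) ^ ((occF l).filter (· < m)).card
    = (if m = 0 then 0 else g m) * ((Rs 0 k).card : Polynomial ℚ) := by
  by_cases hm : m = 0
  · rw [if_pos hm, zero_mul]
    apply Finset.sum_eq_zero
    intro l hl
    rw [Finset.mem_filter] at hl
    obtain ⟨hl, P, t, S, rfl, hP, ht, hS⟩ := hl
    rw [block_mem hP ht hS] at hl
    exact absurd hm hl.1
  · rw [if_neg hm, Rs_shift (m + 2) k]
    unfold g
    have : (∑ l ∈ Gs m, (Polynomial.X : Polynomial ℚ) ^ (occF l).card) * ((Rs (m + 2) k).card : Polynomial ℚ)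
        = ∑ q ∈ Gs m ×ˢ Rs (m + 2) k, (Polynomial.X : Polynomial ℚ) ^ (occF q.1).card := by
      rw [Finset.sum_product]
      simp only [Finset.sum_const, nsmul_eq_mul, Finset.sum_mul]
      exact Finset.sum_congr rfl fun _ _ => mul_comm _ _
    rw [this]
    symm
    have bd : ∀ t P S, t ∈ Gs m → (P, S) ∈ Rs (m + 2) k →
        (∀ x ∈ P, m + 1 < x) ∧ (∀ x ∈ t, x < m) ∧ (∀ x ∈ S, m + 1 < x) := by
      intro t P S h1 h2
      rw [mem_Gs] at h1
      rw [mem_Rs] at h2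
      refine ⟨fun x hx => ?_, fun x hx => ?_, fun x hx => ?_⟩
      · have := (h2.1.2 x).1 (by simp [hx]); omega
      · have := (h1.1.1.2 x).1 hx; omega
      · have := (h2.1.2 x).1 (by simp [hx]); omega
    apply Finset.sum_bij (fun q _ => q.2.1 ++ m :: (q.1 ++ (m + 1) :: q.2.2))
    · rintro ⟨t, P, S⟩ h
      rw [Finset.mem_product] at h
      obtain ⟨hP, ht, hS⟩ := bd t P S h.1 h.2
      rw [Finset.mem_filter, block_mem hP ht hS]
      exact ⟨⟨hm, h.1, h.2⟩, P, t, S, rfl, hP, ht, hS⟩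
    · rintro ⟨t, P, S⟩ h ⟨t', P', S'⟩ _ hh
      rw [Finset.mem_product] at h
      obtain ⟨hP, ht, hS⟩ := bd t P S h.1 h.2
      have hk := (block_mem (k := k) hP ht hS).2 ⟨hm, h.1, h.2⟩
      have hn := (mem_K.1 hk).1.1
      simp only at hh
      obtain ⟨rfl, h2⟩ := split_unique hn hh
      obtain ⟨rfl, rfl⟩ := split_unique (List.nodup_cons.1 (List.nodup_append.1 hn).2.1).2 h2
      rfl
    · intro l hl
      rw [Finset.mem_filter] at hl
      obtain ⟨hl, P, t, S, rfl, hP, ht, hS⟩ := hl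
      rw [block_mem hP ht hS] at hl
      exact ⟨(t, P, S), Finset.mem_product.2 ⟨hl.2.1, hl.2.2⟩, rfl⟩
    · rintro ⟨t, P, S⟩ h
      rw [Finset.mem_product] at h
      obtain ⟨hP, ht, hS⟩ := bd t P S h.1 h.2
      have hk := (block_mem (k := k) hP ht hS).2 ⟨hm, h.1, h.2⟩
      have hn := (mem_K.1 hk).1.1
      congr 2
      ext x
      rw [Finset.mem_filter, mem_occF, mem_occF, occ_inner hn hP ht hS]

theorem occ_lt {n m : ℕ} {l : List ℕ} (hl : l ∈ K n) (h : Occ l m) : m + 1 < n := by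
  obtain ⟨P, t, S, rfl, -⟩ := h
  have := ((mem_K.1 hl).1.2 (m + 1)).1 (by simp)
  omega

theorem diff_small {n : ℕ} (hn : n < 2) : ((K n).card : Polynomial ℚ) - e n = 0 := by
  unfold e
  rw [Finset.card_eq_sum_ones, Nat.cast_sum, ← Finset.sum_sub_distrib]
  apply Finset.sum_eq_zero
  intro l hl
  have : occF l = ∅ := by
    rw [Finset.eq_empty_iff_forall_notMem]
    intro m hm
    have := occ_lt hl (mem_occF.1 hm)
    omega
  simp [this]

theorem diff_big (n : ℕ) : ((K (n + 2)).card : Polynomial ℚ) - e (n + 2) =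
    (1 - Polynomial.X) * ∑ p ∈ Finset.HasAntidiagonal.antidiagonal n,
      (if p.1 = 0 then 0 else g p.1) * ((Rs 0 p.2).card : Polynomial ℚ) := by
  unfold e
  rw [Finset.card_eq_sum_ones, Nat.cast_sum, ← Finset.sum_sub_distrib]
  have h1 : ∀ l ∈ K (n + 2), ((1 : ℕ) : Polynomial ℚ) - Polynomial.X ^ (occF l).card =
      (1 - Polynomial.X) * ∑ p ∈ Finset.HasAntidiagonal.antidiagonal n,
        if Occ l p.1 then Polynomial.X ^ ((occF l).filter (· < p.1)).card else 0 := by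
    intro l hl
    rw [Nat.cast_one, ← telescope, Finset.Nat.sum_antidiagonal_eq_sum_range_succ_mk,
      ← Finset.sum_filter]
    congr 1
    apply Finset.sum_congr _ fun _ _ => rfl
    ext m
    rw [Finset.mem_filter, mem_occF, Finset.mem_range]
    constructor
    · intro h
      have := occ_lt hl h
      exact ⟨by omega, h⟩
    · exact fun h => h.2
  rw [Finset.sum_congr rfl h1, ← Finset.mul_sum, Finset.sum_comm]
  congr 1
  apply Finset.sum_congr rfl
  rintro ⟨m, k⟩ hmk
  rw [Finset.HasAntidiagonal.mem_antidiagonal] at hmk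
  simp only at hmk ⊢
  rw [← block_sum, Finset.sum_filter, show n + 2 = m + 2 + k by omega]

theorem occ_iff_index {l : List ℕ} {m : ℕ} : Occ l m ↔ ∃ i j : ℕ, i < j ∧ ∃ hj : j < l.length,
    ∃ hi : i < l.length, l[i] = m ∧ l[j] = m + 1 ∧
    ∀ k, ∀ hk : k < l.length, (k < i → m + 1 < l[k]) ∧ (i < k → k < j → l[k] < m) ∧
      (j < k → m + 1 < l[k]) := by
  constructor
  · rintro ⟨P, t, S, rfl, hP, ht, hS⟩
    refine ⟨P.length, P.length + 1 + t.length, by omega, by simp; omega, by simp, by simp, ?_, ?_⟩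
    · grind
    · intro k hk
      refine ⟨fun h => ?_, fun h h' => ?_, fun h => ?_⟩
      · apply hP; grind
      · apply ht; grind
      · apply hS; grind
  · rintro ⟨i, j, hij, hj, hi, h1, h2, h3⟩
    refine ⟨l.take i, (l.drop (i + 1)).take (j - i - 1), l.drop (j + 1), ?_, ?_, ?_, ?_⟩
    · subst h1
      rw [← h2]
      have e1 : l = l.take i ++ l.drop i := by simp
      have e2 : l.drop i = l[i] :: l.drop (i + 1) := by simp
      have e3 : l.drop (i + 1) = (l.drop (i + 1)).take (j - i - 1) ++ l.drop j := by
        conv_lhs => rw [← List.take_append_drop (j - i - 1) (l.drop (i + 1))]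
        rw [List.drop_drop, show i + 1 + (j - i - 1) = j by omega]
      have e4 : l.drop j = l[j] :: l.drop (j + 1) := by simp
      rw [← e4, ← e3, ← e2, ← e1]
    · intro x hx
      obtain ⟨k, hk, rfl⟩ := List.mem_take_iff_getElem.1 hx
      exact (h3 k (by omega)).1 (by omega)
    · intro x hx
      obtain ⟨k, hk, rfl⟩ := List.mem_take_iff_getElem.1 hx
      rw [List.length_drop] at hk
      rw [List.getElem_drop]
      exact (h3 (i + 1 + k) (by omega)).2.1 (by omega) (by omega)
    · intro x hx
      obtain ⟨k, hk, rfl⟩ := List.mem_drop_iff_getElem.1 hx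
      exact (h3 (j + 1 + k) (by omega)).2.2 (by omega)

def L {n : ℕ} (σ : Equiv.Perm (Fin n)) : List ℕ := List.ofFn (fun i => (σ i : ℕ))

theorem L_mem {n : ℕ} (σ : Equiv.Perm (Fin n)) : L σ ∈ perms 0 n := by
  rw [mem_perms]
  refine ⟨?_, fun x => ?_⟩
  · unfold L
    rw [List.nodup_ofFn]
    intro a b h
    exact σ.injective (Fin.ext h)
  · unfold L
    rw [List.mem_ofFn]
    constructor
    · rintro ⟨i, rfl⟩
      have := (σ i).2
      omega
    · intro hx
      exact ⟨σ.symm ⟨x, by omega⟩, by simp⟩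

theorem L_inj {n : ℕ} {σ τ : Equiv.Perm (Fin n)} (h : L σ = L τ) : σ = τ := by
  have := List.ofFn_injective h
  ext i
  exact congrFun this i

theorem L_surj {n : ℕ} {l : List ℕ} (h : l ∈ perms 0 n) : ∃ σ : Equiv.Perm (Fin n), L σ = l := by
  have hl : l.length = n := by
    unfold perms at h
    rw [List.mem_toFinset, List.mem_permutations] at h
    simpa using h.length_eq
  rw [mem_perms] at h
  subst hl
  let f : Fin l.length → Fin l.length := fun i => ⟨l[i], by
    have := (h.2 l[i]).1 (by simp)
    omega⟩
  have hf : Function.Injective f := by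
    intro a b hab
    have h1 : l[a] = l[b] := congrArg Fin.val hab
    exact Fin.ext ((List.Nodup.getElem_inj_iff h.1).1 h1)
  refine ⟨Equiv.ofBijective f (Finite.injective_iff_bijective.1 hf), ?_⟩
  unfold L
  simp [f]

theorem L_king {n : ℕ} (σ : Equiv.Perm (Fin n)) : IsKing σ ↔ (L σ).IsChain Far := by
  unfold L IsKing
  rw [List.isChain_ofFn]
  constructor
  · intro h i hi
    have := h ⟨i, by omega⟩ hi
    rw [lt_abs] at this
    unfold Far
    simp only at this
    omega
  · intro h i hi
    have := h i hi
    rw [lt_abs]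
    unfold Far at this
    simp only [Fin.eta] at this
    omega

theorem OccP_succ {n : ℕ} {σ : Equiv.Perm (Fin n)} {i j : Fin n} (h : OccP σ i j) :
    (σ j : ℕ) = σ i + 1 := by
  obtain ⟨h1, h2, h3, h4, h5⟩ := h
  by_contra hne
  have h2' : (σ i : ℕ) < σ j := h2
  have hlt : (σ i : ℕ) + 1 < n := by have := (σ j).2; omega
  obtain ⟨k, hk⟩ := σ.surjective ⟨(σ i : ℕ) + 1, hlt⟩
  have hk' : (σ k : ℕ) = σ i + 1 := by rw [hk]
  rcases lt_trichotomy k i with h | h | h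
  · have : (σ j : ℕ) < σ k := h3 k h
    omega
  · subst h; omega
  · rcases lt_trichotomy k j with h' | h' | h'
    · have : (σ k : ℕ) < σ i := h4 k h h'
      omega
    · subst h'; omega
    · have : (σ j : ℕ) < σ k := h5 k h'
      omega

theorem occP_eq {n : ℕ} (σ : Equiv.Perm (Fin n)) : occP σ = (occF (L σ)).card := by
  unfold occP
  rw [Nat.card_eq_fintype_card, Fintype.card_subtype]
  apply Finset.card_bij (fun p _ => (σ p.1 : ℕ))
  · rintro ⟨i, j⟩ h
    rw [Finset.mem_filter] at h
    have h' := h.2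
    simp only at h'
    have hs := OccP_succ h'
    obtain ⟨h1, h2, h3, h4, h5⟩ := h'
    rw [mem_occF, occ_iff_index]
    refine ⟨i, j, h1, by simp [L], by simp [L], by simp [L], by simp [L, hs], ?_⟩
    intro k hk
    have hk' : k < n := by simpa [L] using hk
    simp only [L, List.getElem_ofFn]
    rw [← hs]
    exact ⟨fun h => h3 ⟨k, hk'⟩ h, fun h h' => h4 ⟨k, hk'⟩ h h', fun h => h5 ⟨k, hk'⟩ h⟩
  · rintro ⟨i, j⟩ h ⟨i', j'⟩ h' hh
    rw [Finset.mem_filter] at h h'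
    simp only at hh
    have e1 := OccP_succ h.2
    have e2 := OccP_succ h'.2
    simp only at e1 e2
    have := σ.injective (Fin.ext hh)
    have := σ.injective (Fin.ext (show (σ j : ℕ) = σ j' by omega))
    simp [*]
  · intro m hm
    rw [mem_occF, occ_iff_index] at hm
    obtain ⟨i, j, hij, hj, hi, h1, h2, h3⟩ := hm
    have hj' : j < n := by simpa [L] using hj
    have hi' : i < n := by simpa [L] using hi
    simp only [L, List.getElem_ofFn] at h1 h2 h3
    refine ⟨(⟨i, hi'⟩, ⟨j, hj'⟩), ?_, h1⟩
    rw [Finset.mem_filter]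
    refine ⟨Finset.mem_univ _, hij, ?_, ?_, ?_, ?_⟩
    · rw [Fin.lt_def, h1, h2]; omega
    · intro k hk
      have := (h3 k (by simp)).1 hk
      rw [Fin.lt_def, h2]; exact this
    · intro k hk hk'
      have := (h3 k (by simp)).2.1 hk hk'
      rw [Fin.lt_def, h1]; exact this
    · intro k hk
      have := (h3 k (by simp)).2.2 hk
      rw [Fin.lt_def, h2]; exact this

theorem sum_K {M : Type*} [AddCommMonoid M] (n : ℕ) (f : List ℕ → M) :
    ∑ σ ∈ (Finset.univ : Finset (Equiv.Perm (Fin n))).filter IsKing, f (L σ) = ∑ l ∈ K n, f l := by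
  apply Finset.sum_bij (fun σ _ => L σ)
  · intro σ h
    rw [Finset.mem_filter] at h
    unfold K
    rw [Finset.mem_filter, ← L_king]
    exact ⟨L_mem σ, h.2⟩
  · intro σ _ τ _ h
    exact L_inj h
  · intro l h
    unfold K at h
    rw [Finset.mem_filter] at h
    obtain ⟨σ, rfl⟩ := L_surj h.1
    exact ⟨σ, by rw [Finset.mem_filter, L_king]; exact ⟨Finset.mem_univ _, h.2⟩, rfl⟩
  · intros; rfl

theorem kingCount_eq (n : ℕ) : kingCount n = (K n).card := by
  unfold kingCount
  rw [Nat.card_eq_fintype_card, Fintype.card_subtype, Finset.card_eq_sum_ones, Finset.card_eq_sum_ones]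
  exact sum_K n (fun _ => 1)

open PowerSeries

theorem coeff_E (n : ℕ) : coeff n Etu = e n := by
  unfold Etu e
  rw [coeff_mk, ← Finset.sum_filter, ← sum_K]
  exact Finset.sum_congr rfl fun σ _ => by rw [occP_eq]

theorem coeff_A (n : ℕ) : coeff n kingAu = ((K n).card : Polynomial ℚ) := by
  unfold kingAu
  rw [coeff_mk, kingCount_eq]

noncomputable def Gser : PowerSeries (Polynomial ℚ) := PowerSeries.mk g
noncomputable def G1 : PowerSeries (Polynomial ℚ) := PowerSeries.mk fun m => if m = 0 then 0 else g m
noncomputable def R1 : PowerSeries (Polynomial ℚ) :=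
  PowerSeries.mk fun k => ((Rs 0 k).card : Polynomial ℚ)

theorem K_zero_eq : K 0 = {[]} := by
  ext l
  rw [mem_K, Finset.mem_singleton]
  constructor
  · rintro ⟨⟨_, h⟩, _⟩
    rw [List.eq_nil_iff_forall_not_mem]
    intro x; rw [h]; omega
  · rintro rfl
    simp [IsP]

theorem g_zero : g 0 = 1 := by
  rw [← e_zero]
  unfold e
  rw [K_zero_eq, Finset.sum_singleton]
  simp [occF]

theorem eq1 : Etu = (1 + T) * Gser := by
  ext1 n
  rw [coeff_E, add_mul, one_mul, map_add]
  unfold T Gser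
  cases n with
  | zero => simp [e_zero]
  | succ n => rw [coeff_succ_X_mul, coeff_mk, coeff_mk, e_succ]

theorem eqG : G1 = Gser - 1 := by
  ext1 n
  rw [map_sub]
  unfold G1 Gser
  rw [coeff_mk, coeff_mk, coeff_one]
  split_ifs with h
  · subst h; rw [g_zero, sub_self]
  · rw [sub_zero]

theorem eq2 : kingAu = 1 + T * R1 - T * (T * R1) := by
  ext1 n
  rw [coeff_A, map_sub, map_add, coeff_one]
  unfold T R1
  rcases n with _ | _ | n
  · simp [K_zero]
  · rw [zero_add, K_one]
    rw [← zero_add 1, coeff_succ_X_mul, coeff_succ_X_mul]; simp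
  · rw [coeff_succ_X_mul, coeff_succ_X_mul, coeff_succ_X_mul, coeff_mk, coeff_mk, ← K_succ_card]
    simp

theorem eq3 : kingAu - Etu = (1 - U) * (T * (T * (G1 * R1))) := by
  have hU : (1 - U) = C (1 - Polynomial.X : Polynomial ℚ) := by
    unfold U; simp
  ext1 n
  rw [map_sub, coeff_A, coeff_E, hU, coeff_C_mul]
  unfold T
  rcases n with _ | _ | n
  · rw [diff_small (by norm_num)]; simp
  · rw [diff_small (by norm_num), coeff_succ_X_mul]; simp
  · rw [coeff_succ_X_mul, coeff_succ_X_mul, diff_big, coeff_mul]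
    simp only [G1, R1, coeff_mk]

end King55

theorem statement_17 :
    (1 - T * (1 - U) - T ^ 2 + T * (1 - U) * kingAu) * Etu
      = (1 + T) * ((1 - U * T) * kingAu - T * (1 - U)) := by
  have h1 := King55.eq1
  have h2 := King55.eq2
  have h3 := King55.eq3
  rw [King55.eqG] at h3
  linear_combination -(1 - T ^ 2) * h3 + (1 - U) * T *
    ((Etu - 1 - T) * h2 + (1 - T) * T * King55.R1 * h1)
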